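/- Let n ≥ 2, let ζ₀ ∈ ℂⁿ satisfy ζ₀·ζ₀ = 0 and |Re ζ₀| = |Im ζ₀| = 1, and let V ∈ C_c^∞(ℝⁿ; ℂⁿ). Then Φ := (1/2) N_{ζ₀}⁻¹(ζ₀·V) is a smooth bounded function on ℝⁿ satisfying the transport equation −2 ζ₀·∇Φ + ζ₀·V = 0 everywhere in ℝⁿ; consequently a := e^{Φ} is smooth, both a and 1/a are bounded on ℝⁿ, and a satisfies −2 ζ₀·∇a + (ζ₀·V) a = 0 everywhere in ℝⁿ. -/

import Mathlib

/-!
Since `ζ·ζ = 0` and both parts of `ζ` are unit vectors, `Re ζ` and `Im ζ` are orthonormal. On every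
plane `x + span (Re ζ, Im ζ)` the operator `ζ·∇` becomes `∂₁ + i ∂₂ = 2 ∂̄`, and `N_ζ⁻¹ f` is
`1 / (2π)` times the convolution of the Cauchy kernel `1 / (y₁ + i y₂)` with the restriction of `f`.

The kernel is locally integrable, so this convolution depends smoothly on `x` (`Ninv_contDiff`); the
restrictions of `f` are supported in squares of a fixed size, so it is bounded uniformly in `x`
(`Ninv_bounded`). The identity `ζ·∇ (N_ζ⁻¹ f) = f` (`Ninv_transport`) is the Cauchy–Pompeiu formula
`∫ (∂₁ + i ∂₂) g / (y₁ + i y₂) = -2π g(0)` (`cauchy_pompeiu`), which is proved in polar coordinates.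
The claims about `a = exp Φ` follow from the chain rule and from `|exp (±Φ)| ≤ exp |Φ|`.
-/

open MeasureTheory Filter Topology

/-- Classical partial derivative in the `j`-th coordinate direction. -/
noncomputable def pd {n : ℕ} (f : (Fin n → ℝ) → ℂ) (j : Fin n) (x : Fin n → ℝ) : ℂ :=
  fderiv ℝ f x (Pi.single j 1)

/-- The Cauchy-transform type inverse `N_{ζ₀}⁻¹` of the operator `N_{ζ₀} = ζ₀·∇`. -/
noncomputable def Ninv {n : ℕ} (ζ : Fin n → ℂ) (f : (Fin n → ℝ) → ℂ)
    (x : Fin n → ℝ) : ℂ :=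
  (1 / (2 * Real.pi)) * ∫ y : ℝ × ℝ,
    f (fun i => x i - y.1 * (ζ i).re - y.2 * (ζ i).im) / ((y.1 : ℂ) + (y.2 : ℂ) * Complex.I)

/-! ### The Cauchy kernel and the Cauchy–Pompeiu formula -/

/-- The Cauchy kernel `1 / (y₁ + i y₂)` on `ℝ²`, with the junk value `0` at the origin. -/
noncomputable def cauchyKernel (y : ℝ × ℝ) : ℂ := ((y.1 : ℂ) + (y.2 : ℂ) * Complex.I)⁻¹

lemma cauchyKernel_norm (y : ℝ × ℝ) : ‖cauchyKernel y‖ = (Real.sqrt (y.1 ^ 2 + y.2 ^ 2))⁻¹ := by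
  rw [cauchyKernel, norm_inv, Complex.norm_add_mul_I]

lemma cauchyKernel_measurable : Measurable cauchyKernel := by
  unfold cauchyKernel
  fun_prop

lemma polar_sq (p : ℝ × ℝ) :
    (polarCoord.symm p).1 ^ 2 + (polarCoord.symm p).2 ^ 2 = p.1 ^ 2 := by
  simp only [polarCoord_symm_apply]
  nlinarith [Real.sin_sq_add_cos_sq p.2]

/-- In polar coordinates the Jacobian `r` cancels the singularity `1 / r` of the kernel. -/
lemma cauchyKernel_integrableOn (R : ℝ) :
    IntegrableOn cauchyKernel {y : ℝ × ℝ | y.1 ^ 2 + y.2 ^ 2 < R ^ 2} := by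
  have hm : MeasurableSet {y : ℝ × ℝ | y.1 ^ 2 + y.2 ^ 2 < R ^ 2} :=
    measurableSet_lt (by fun_prop) (by fun_prop)
  refine ⟨cauchyKernel_measurable.aestronglyMeasurable, ?_⟩
  rw [hasFiniteIntegral_iff_enorm, ← lintegral_indicator hm, ← lintegral_comp_polarCoord_symm]
  have hb : ∀ p ∈ polarCoord.target, ENNReal.ofReal p.1 •
      Set.indicator {y : ℝ × ℝ | y.1 ^ 2 + y.2 ^ 2 < R ^ 2} (fun a => ‖cauchyKernel a‖ₑ)
        (polarCoord.symm p) ≤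
      Set.indicator (Set.Icc (-|R|) |R| ×ˢ Set.Icc (-Real.pi) Real.pi) (fun _ => 1) p := by
    intro p hp
    rw [polarCoord_target] at hp
    obtain ⟨h1, h2⟩ := hp
    simp only [Set.mem_Ioi] at h1
    by_cases h : p.1 ^ 2 < R ^ 2
    · rw [Set.indicator_of_mem (by simpa only [Set.mem_ofPred_eq, polar_sq] using h),
        Set.indicator_of_mem]
      · rw [← ofReal_norm, cauchyKernel_norm, polar_sq, Real.sqrt_sq h1.le, smul_eq_mul,
          ← ENNReal.ofReal_mul h1.le, mul_inv_cancel₀ h1.ne']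
        simp
      · have := sq_lt_sq.1 h
        rw [abs_of_pos h1] at this
        exact ⟨⟨by linarith [abs_nonneg R], this.le⟩, Set.Ioo_subset_Icc_self h2⟩
    · rw [Set.indicator_of_notMem (by simpa only [Set.mem_ofPred_eq, polar_sq] using h)]
      simp
  refine lt_of_le_of_lt (setLIntegral_mono' polarCoord.open_target.measurableSet hb) ?_
  refine lt_of_le_of_lt (setLIntegral_le_lintegral _ _) ?_
  rw [lintegral_indicator (measurableSet_Icc.prod measurableSet_Icc)]
  simp only [lintegral_const, one_mul, Measure.restrict_apply MeasurableSet.univ, Set.univ_inter]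
  exact (isCompact_Icc.prod isCompact_Icc).measure_lt_top

lemma cauchyKernel_locallyIntegrable : LocallyIntegrable cauchyKernel := by
  intro x
  refine ⟨_, ?_, cauchyKernel_integrableOn (x.1 ^ 2 + x.2 ^ 2 + 1)⟩
  refine (isOpen_lt (by fun_prop) (by fun_prop)).mem_nhds ?_
  simp only [Set.mem_ofPred_eq]
  nlinarith [sq_nonneg x.1, sq_nonneg x.2]

/-- The Cauchy–Pompeiu formula at the origin for a compactly supported `g`. With
`g(r, θ) = g(r cos θ, r sin θ)`, the integrand times the Jacobian is `∂_r g + (i / r) ∂_θ g`: the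
radial part integrates to `-g(0)` along every ray, the angular part to `0` on every circle. -/
lemma cauchy_pompeiu (g : ℝ × ℝ → ℂ) (hg : ContDiff ℝ 1 g) (hc : HasCompactSupport g) :
    ∫ y, cauchyKernel y * (fderiv ℝ g y (1, 0) + Complex.I * fderiv ℝ g y (0, 1)) =
      -(2 * Real.pi) * g 0 := by
  obtain ⟨R, hR0, hR⟩ : ∃ R : ℝ, 0 < R ∧ ∀ y : ℝ × ℝ, R ^ 2 ≤ y.1 ^ 2 + y.2 ^ 2 → g y = 0 := by
    have hk : IsCompact ((fun y : ℝ × ℝ => y.1 ^ 2 + y.2 ^ 2) '' tsupport g) :=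
      hc.image (by fun_prop)
    obtain ⟨B, hB⟩ := hk.bddAbove
    refine ⟨|B| + 1, by positivity, fun y hy => ?_⟩
    by_contra h
    have := hB ⟨y, subset_tsupport _ h, rfl⟩
    simp only at this
    nlinarith [abs_nonneg B, le_abs_self B]
  -- the polar pullback of `g`, with its radial and (scaled) angular derivatives
  set P : ℝ → ℝ → ℝ × ℝ := fun r θ => (r * Real.cos θ, r * Real.sin θ) with hP
  set A : ℝ → ℝ → ℂ := fun r θ => fderiv ℝ g (P r θ) (Real.cos θ, Real.sin θ) with hA
  set B : ℝ → ℝ → ℂ := fun r θ => fderiv ℝ g (P r θ) (-Real.sin θ, Real.cos θ) with hB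
  have hgd : ∀ y, HasFDerivAt g (fderiv ℝ g y) y := fun y =>
    ((hg.differentiable (by norm_num)) y).hasFDerivAt
  have hfc : Continuous (fderiv ℝ g) := hg.continuous_fderiv (by norm_num)
  have hAc : Continuous (Function.uncurry A) := by
    simp only [hA, hP, Function.uncurry_def]
    fun_prop
  have hBc : Continuous (Function.uncurry B) := by
    simp only [hB, hP, Function.uncurry_def]
    fun_prop
  have hA' : ∀ θ r, HasDerivAt (fun r => g (P r θ)) (A r θ) r := by
    intro θ r
    refine (hgd (P r θ)).comp_hasDerivAt r (f := fun r => P r θ) ?_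
    have h1 := (hasDerivAt_id r).mul_const (Real.cos θ)
    have h2 := (hasDerivAt_id r).mul_const (Real.sin θ)
    simpa using h1.prodMk h2
  have hB' : ∀ r θ, HasDerivAt (fun θ => g (P r θ)) (r * B r θ) θ := by
    intro r θ
    have h1 := (Real.hasDerivAt_cos θ).const_mul r
    have h2 := (Real.hasDerivAt_sin θ).const_mul r
    have h3 := (hgd (P r θ)).comp_hasDerivAt θ (f := fun θ => P r θ) (h1.prodMk h2)
    have h4 : ((r * -Real.sin θ, r * Real.cos θ) : ℝ × ℝ) = r • (-Real.sin θ, Real.cos θ) := by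
      simp
    rw [h4, map_smul, Complex.real_smul] at h3
    exact h3
  have hsq : ∀ r θ, (P r θ).1 ^ 2 + (P r θ).2 ^ 2 = r ^ 2 := fun r θ => by
    simp only [hP]; nlinarith [Real.sin_sq_add_cos_sq θ]
  have hfz : ∀ r θ, R < r → fderiv ℝ g (P r θ) = 0 := by
    intro r θ hr
    have : g =ᶠ[𝓝 (P r θ)] fun _ => 0 := by
      have ho : IsOpen {y : ℝ × ℝ | R ^ 2 < y.1 ^ 2 + y.2 ^ 2} :=
        isOpen_lt (by fun_prop) (by fun_prop)
      filter_upwards [ho.mem_nhds (x := P r θ) (by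
        simp only [Set.mem_ofPred_eq, hsq]; nlinarith)] with y hy
      exact hR y (le_of_lt hy)
    rw [this.fderiv_eq]; simp
  -- continuity plus vanishing for `r > R` gives integrability on the polar strip
  have hint : ∀ C : ℝ → ℝ → ℂ, Continuous (Function.uncurry C) → (∀ r θ, R < r → C r θ = 0) →
      IntegrableOn (Function.uncurry C) (Set.Ioi 0 ×ˢ Set.Ioo (-Real.pi) Real.pi)
        ((volume : Measure ℝ).prod (volume : Measure ℝ)) := by
    intro C hC hz
    have h1 : IntegrableOn (Function.uncurry C) (Set.Icc 0 R ×ˢ Set.Icc (-Real.pi) Real.pi)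
        ((volume : Measure ℝ).prod (volume : Measure ℝ)) :=
      hC.continuousOn.integrableOn_compact (isCompact_Icc.prod isCompact_Icc)
    refine IntegrableOn.of_forall_sdiff_eq_zero h1 (measurableSet_Ioi.prod measurableSet_Ioo) ?_
    rintro ⟨r, θ⟩ ⟨⟨h2, h3⟩, h4⟩
    refine hz r θ ?_
    by_contra h5
    exact h4 ⟨⟨le_of_lt h2, not_lt.1 h5⟩, Set.Ioo_subset_Icc_self h3⟩
  have hAi := hint A hAc (fun r θ hr => by simp only [hA, hfz r θ hr]; simp)
  have hBi := hint B hBc (fun r θ hr => by simp only [hB, hfz r θ hr]; simp)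
  -- `e^{-iθ} (∂₁ + i ∂₂) g = ∂_r g + (i / r) ∂_θ g`
  have hpolar : ∀ p ∈ polarCoord.target, p.1 • (cauchyKernel (polarCoord.symm p) *
      (fderiv ℝ g (polarCoord.symm p) (1, 0) + Complex.I * fderiv ℝ g (polarCoord.symm p) (0, 1))) =
      Function.uncurry A p + Complex.I * Function.uncurry B p := by
    rintro ⟨r, θ⟩ hp
    rw [polarCoord_target] at hp
    have hr : (0 : ℝ) < r := hp.1
    have hr' : (r : ℂ) ≠ 0 := by exact_mod_cast hr.ne'
    have e1 : A r θ = Real.cos θ * fderiv ℝ g (P r θ) (1, 0) +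
        Real.sin θ * fderiv ℝ g (P r θ) (0, 1) := by
      have : ((Real.cos θ, Real.sin θ) : ℝ × ℝ) =
        Real.cos θ • (1, 0) + Real.sin θ • (0, 1) := by simp
      simp only [hA]
      rw [this, map_add, map_smul, map_smul, Complex.real_smul, Complex.real_smul]
    have e2 : B r θ = -Real.sin θ * fderiv ℝ g (P r θ) (1, 0) +
        Real.cos θ * fderiv ℝ g (P r θ) (0, 1) := by
      have : ((-Real.sin θ, Real.cos θ) : ℝ × ℝ) =
        (-Real.sin θ) • (1, 0) + Real.cos θ • (0, 1) := by simp
      simp only [hB]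
      rw [this, map_add, map_smul, map_smul, Complex.real_smul, Complex.real_smul,
        Complex.ofReal_neg]
    have e3 : cauchyKernel (P r θ) = (r : ℂ)⁻¹ * (Real.cos θ - Real.sin θ * Complex.I) := by
      have h1 : ((Real.cos θ : ℂ) + Real.sin θ * Complex.I) *
          (Real.cos θ - Real.sin θ * Complex.I) = 1 := by
        have : ((Real.cos θ : ℂ)) ^ 2 + (Real.sin θ : ℂ) ^ 2 = 1 := by
          exact_mod_cast Real.cos_sq_add_sin_sq θ
        linear_combination this - (Real.sin θ : ℂ) ^ 2 * Complex.I_sq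
      simp only [cauchyKernel, hP, Complex.ofReal_mul]
      rw [mul_assoc, ← mul_add, mul_inv, eq_comm]
      congr 1
      exact eq_inv_of_mul_eq_one_right h1
    have e4 : polarCoord.symm (r, θ) = P r θ := rfl
    simp only [Function.uncurry_apply_pair, e4]
    rw [e1, e2, e3, Complex.real_smul]
    field_simp
    linear_combination -(Real.sin θ : ℂ) * (fderiv ℝ g (P r θ) (0, 1)) * Complex.I_sq
  rw [← integral_comp_polarCoord_symm,
    setIntegral_congr_fun polarCoord.open_target.measurableSet hpolar, polarCoord_target,
    Measure.volume_eq_prod, integral_add hAi (hBi.const_mul _), integral_const_mul]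
  have hIA : ∫ p in Set.Ioi 0 ×ˢ Set.Ioo (-Real.pi) Real.pi, Function.uncurry A p
      ∂((volume : Measure ℝ).prod (volume : Measure ℝ)) = -(2 * Real.pi) * g 0 := by
    rw [← setIntegral_prod_swap, setIntegral_prod (fun z => Function.uncurry A z.swap) hAi.swap]
    have : ∀ θ : ℝ, ∫ r in Set.Ioi (0 : ℝ), A r θ = -g 0 := by
      intro θ
      have hP0 : P 0 θ = 0 := by simp [hP]
      have hz : (fun r => g (P r θ)) =ᶠ[atTop] fun _ => 0 := by
        filter_upwards [eventually_ge_atTop R] with r hr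
        exact hR _ (by rw [hsq]; nlinarith)
      have hi : IntegrableOn (fun r => A r θ) (Set.Ioi 0) := by
        have h1 : IntegrableOn (fun r => A r θ) (Set.Icc 0 R) :=
          (hAc.comp (by fun_prop : Continuous fun r : ℝ => (r, θ))).continuousOn.integrableOn_compact
            isCompact_Icc
        refine IntegrableOn.of_forall_sdiff_eq_zero h1 measurableSet_Ioi ?_
        rintro r ⟨h2, h4⟩
        have : R < r := by
          by_contra h5
          exact h4 ⟨le_of_lt h2, not_lt.1 h5⟩
        simp only [hA, hfz r θ this]; simp
      rw [integral_Ioi_of_hasDerivAt_of_tendsto' (fun r _ => hA' θ r) hi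
        (tendsto_const_nhds.congr' hz.symm), hP0, zero_sub]
    simp only [Prod.swap, Function.uncurry_apply_pair, this]
    rw [setIntegral_const]
    simp [Real.pi_pos.le]
    left; ring
  have hIB : ∫ p in Set.Ioi 0 ×ˢ Set.Ioo (-Real.pi) Real.pi, Function.uncurry B p
      ∂((volume : Measure ℝ).prod (volume : Measure ℝ)) = 0 := by
    rw [setIntegral_prod _ hBi]
    rw [setIntegral_congr_fun (g := fun _ => (0 : ℂ)) measurableSet_Ioi, integral_zero]
    intro r hr
    have hr' : (r : ℂ) ≠ 0 := by exact_mod_cast (ne_of_gt hr)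
    have hper : P r Real.pi = P r (-Real.pi) := by simp [hP]
    have h1 := intervalIntegral.integral_eq_sub_of_hasDerivAt (a := -Real.pi) (b := Real.pi)
      (fun θ _ => hB' r θ) (by
        apply Continuous.intervalIntegrable
        exact continuous_const.mul (hBc.comp (by fun_prop : Continuous fun θ : ℝ => (r, θ))))
    rw [hper, sub_self, intervalIntegral.integral_const_mul] at h1
    have h2 := (mul_eq_zero.1 h1).resolve_left hr'
    rw [intervalIntegral.integral_of_le (by linarith [Real.pi_pos]),
      integral_Ioc_eq_integral_Ioo] at h2
    exact h2
  rw [hIA, hIB]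
  ring

/-! ### Restriction to the planes spanned by `Re ζ` and `Im ζ` -/

/-- The affine parametrization `y ↦ x + y₁ Re ζ + y₂ Im ζ` of the plane through `x` spanned by
`Re ζ` and `Im ζ`. -/
def planeMap {n : ℕ} (ζ : Fin n → ℂ) (x : Fin n → ℝ) (y : ℝ × ℝ) : Fin n → ℝ :=
  fun i => x i + y.1 * (ζ i).re + y.2 * (ζ i).im

/-- On each such plane, `N_ζ⁻¹ f` is a multiple of the convolution of the Cauchy kernel with the
restriction of `f`. -/
lemma Ninv_eq_convolution {n : ℕ} (ζ : Fin n → ℂ) (f : (Fin n → ℝ) → ℂ) (x : Fin n → ℝ)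
    (t : ℝ × ℝ) :
    Ninv ζ f (planeMap ζ x t) = (1 / (2 * Real.pi)) *
      (convolution cauchyKernel (fun y => f (planeMap ζ x y)) (ContinuousLinearMap.mul ℝ ℂ)
        volume t) := by
  unfold Ninv convolution
  congr 1
  refine integral_congr_ae (ae_of_all _ fun y => ?_)
  simp only [ContinuousLinearMap.mul_apply', cauchyKernel, div_eq_mul_inv]
  rw [mul_comm]
  congr 2
  funext i
  simp only [planeMap, Prod.fst_sub, Prod.snd_sub]
  ring

lemma planeMap_zero {n : ℕ} (ζ : Fin n → ℂ) (x : Fin n → ℝ) : planeMap ζ x 0 = x := by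
  funext i; simp [planeMap]

lemma planeMap_contDiff {n : ℕ} (ζ : Fin n → ℂ) {m : WithTop ℕ∞} :
    ContDiff ℝ m (fun q : (Fin n → ℝ) × (ℝ × ℝ) => planeMap ζ q.1 q.2) := by
  unfold planeMap
  fun_prop

/-- `Re ζ` and `Im ζ` are orthonormal in `ℝⁿ` (stated in coordinates, since `Fin n → ℝ` carries the
sup norm). -/
structure IsotropicPair {n : ℕ} (ζ : Fin n → ℂ) : Prop where
  re_sq : (∑ i, (ζ i).re ^ 2) = 1
  im_sq : (∑ i, (ζ i).im ^ 2) = 1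
  re_im : (∑ i, (ζ i).re * (ζ i).im) = 0

lemma coord_re {n : ℕ} {ζ : Fin n → ℂ} (h : IsotropicPair ζ) (x : Fin n → ℝ) (y : ℝ × ℝ) :
    ∑ i, planeMap ζ x y i * (ζ i).re = ∑ i, x i * (ζ i).re + y.1 := by
  have : ∀ i, planeMap ζ x y i * (ζ i).re =
      x i * (ζ i).re + y.1 * (ζ i).re ^ 2 + y.2 * ((ζ i).re * (ζ i).im) := fun i => by
    simp only [planeMap]; ring
  simp only [this, Finset.sum_add_distrib, ← Finset.mul_sum, h.re_sq, h.re_im]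
  ring

lemma coord_im {n : ℕ} {ζ : Fin n → ℂ} (h : IsotropicPair ζ) (x : Fin n → ℝ) (y : ℝ × ℝ) :
    ∑ i, planeMap ζ x y i * (ζ i).im = ∑ i, x i * (ζ i).im + y.2 := by
  have : ∀ i, planeMap ζ x y i * (ζ i).im =
      x i * (ζ i).im + y.2 * (ζ i).im ^ 2 + y.1 * ((ζ i).re * (ζ i).im) := fun i => by
    simp only [planeMap]; ring
  simp only [this, Finset.sum_add_distrib, ← Finset.mul_sum, h.im_sq, h.re_im]
  ring

lemma exists_coord_bound {n : ℕ} (ζ : Fin n → ℂ) {f : (Fin n → ℝ) → ℂ}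
    (hc : HasCompactSupport f) : ∃ R : ℝ, 0 ≤ R ∧ ∀ z, f z ≠ 0 →
      |∑ i, z i * (ζ i).re| ≤ R ∧ |∑ i, z i * (ζ i).im| ≤ R := by
  obtain ⟨R, hR⟩ := (hc.image (f := fun z : Fin n → ℝ =>
    |∑ i, z i * (ζ i).re| + |∑ i, z i * (ζ i).im|) (by fun_prop)).bddAbove
  refine ⟨|R|, abs_nonneg R, fun z hz => ?_⟩
  have := hR ⟨z, subset_tsupport _ hz, rfl⟩
  simp only at this
  constructor <;>
  linarith [le_abs_self R, abs_nonneg (∑ i, z i * (ζ i).re), abs_nonneg (∑ i, z i * (ζ i).im)]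

/-- If the `Re ζ`- and `Im ζ`-coordinates of points of the support of `f` are at most `R` in absolute
value, then the restriction of `f` to the plane through `x` vanishes outside a square of side `2R`,
whose size does not depend on `x`. -/
lemma planeMap_eq_zero {n : ℕ} {ζ : Fin n → ℂ} (h : IsotropicPair ζ) {f : (Fin n → ℝ) → ℂ} {R : ℝ}
    (hR : ∀ z, f z ≠ 0 → |∑ i, z i * (ζ i).re| ≤ R ∧ |∑ i, z i * (ζ i).im| ≤ R)
    (x : Fin n → ℝ) (y : ℝ × ℝ)
    (hy : y ∉ Set.Icc (-(∑ i, x i * (ζ i).re) - R) (-(∑ i, x i * (ζ i).re) + R) ×ˢ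
      Set.Icc (-(∑ i, x i * (ζ i).im) - R) (-(∑ i, x i * (ζ i).im) + R)) :
    f (planeMap ζ x y) = 0 := by
  by_contra hne
  have := hR _ hne
  rw [coord_re h, coord_im h, abs_le, abs_le] at this
  obtain ⟨⟨h1, h2⟩, h3, h4⟩ := this
  exact hy ⟨⟨by linarith, by linarith⟩, ⟨by linarith, by linarith⟩⟩

/-! ### Smoothness and boundedness -/

/-- Smoothness is local, and for `x` near `x₀` the restrictions of `f` to the planes through `x` are
supported in a common compact rectangle, so convolution against the locally integrable kernel
depends smoothly on the parameter `x`. -/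
lemma Ninv_contDiff {n : ℕ} {ζ : Fin n → ℂ} (h : IsotropicPair ζ) {f : (Fin n → ℝ) → ℂ}
    (hf : ContDiff ℝ (⊤ : ℕ∞) f) (hc : HasCompactSupport f) :
    ContDiff ℝ (⊤ : ℕ∞) (Ninv ζ f) := by
  obtain ⟨R, -, hR⟩ := exists_coord_bound ζ hc
  have heq : Ninv ζ f = fun x => (1 / (2 * Real.pi) : ℂ) *
      (convolution cauchyKernel (fun y => f (planeMap ζ x y)) (ContinuousLinearMap.mul ℝ ℂ)
        volume 0) := by
    funext x
    rw [← Ninv_eq_convolution, planeMap_zero]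
  rw [heq]
  refine contDiff_const.mul (contDiff_iff_contDiffAt.2 fun x₀ => ?_)
  set s : Set (Fin n → ℝ) :=
    {x | |∑ i, x i * (ζ i).re| < |∑ i, x₀ i * (ζ i).re| + 1} ∩
    {x | |∑ i, x i * (ζ i).im| < |∑ i, x₀ i * (ζ i).im| + 1} with hs
  have hso : IsOpen s :=
    (isOpen_lt (by fun_prop) (by fun_prop)).inter (isOpen_lt (by fun_prop) (by fun_prop))
  set c := |∑ i, x₀ i * (ζ i).re| + 1 + R with hcdef
  set d := |∑ i, x₀ i * (ζ i).im| + 1 + R with hddef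
  refine (contDiffOn_convolution_right_with_param_comp (ContinuousLinearMap.mul ℝ ℂ)
    (v := fun _ => 0) (s := s) (g := fun x y => f (planeMap ζ x y))
    (k := Set.Icc (-c) c ×ˢ Set.Icc (-d) d)
    contDiffOn_const hso (isCompact_Icc.prod isCompact_Icc) ?_
    cauchyKernel_locallyIntegrable ?_).contDiffAt (hso.mem_nhds ?_)
  · rintro x y ⟨hx1, hx2⟩ hy
    refine planeMap_eq_zero h hR x y fun hy' => hy ?_
    simp only [Set.mem_ofPred_eq, abs_lt] at hx1 hx2
    obtain ⟨⟨h1, h2⟩, h3, h4⟩ := hy'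
    exact ⟨⟨by linarith, by linarith⟩, ⟨by linarith, by linarith⟩⟩
  · exact (hf.comp (planeMap_contDiff ζ)).contDiffOn
  · constructor <;> simp

/-- The kernel is integrable on the unit disc and bounded by `1` outside it, and the restriction of `f`
to each plane is supported in a square of fixed size. -/
lemma Ninv_bounded {n : ℕ} {ζ : Fin n → ℂ} (h : IsotropicPair ζ) {f : (Fin n → ℝ) → ℂ}
    (hf : Continuous f) (hc : HasCompactSupport f) :
    ∃ M : ℝ, ∀ x, ‖Ninv ζ f x‖ ≤ M := by
  obtain ⟨R, hR0, hR⟩ := exists_coord_bound ζ hc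
  obtain ⟨C, hC⟩ := hf.bounded_above_of_compact_support hc
  have hC0 : 0 ≤ C := (norm_nonneg _).trans (hC 0)
  set D : Set (ℝ × ℝ) := {y : ℝ × ℝ | y.1 ^ 2 + y.2 ^ 2 < 1 ^ 2} with hD
  have hDm : MeasurableSet D := measurableSet_lt (by fun_prop) (by fun_prop)
  have hDi : Integrable (D.indicator fun y => ‖cauchyKernel y‖) :=
    (integrable_indicator_iff hDm).2 (cauchyKernel_integrableOn 1).norm
  -- `(2R)²` is the area of the square containing the support of the integrand
  refine ⟨‖(1 / (2 * Real.pi) : ℂ)‖ *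
    (C * ((∫ y, D.indicator (fun y => ‖cauchyKernel y‖) y) + (2 * R) * (2 * R))), fun x => ?_⟩
  unfold Ninv
  rw [norm_mul]
  refine mul_le_mul_of_nonneg_left ?_ (norm_nonneg _)
  set b := ∑ i, x i * (ζ i).re with hb
  set b' := ∑ i, x i * (ζ i).im with hb'
  set Q : Set (ℝ × ℝ) := Set.Icc (b - R) (b + R) ×ˢ Set.Icc (b' - R) (b' + R) with hQ
  have hQm : MeasurableSet Q := measurableSet_Icc.prod measurableSet_Icc
  have hQv : volume Q = ENNReal.ofReal (2 * R) * ENNReal.ofReal (2 * R) := by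
    rw [hQ, Measure.volume_eq_prod, Measure.prod_prod, Real.volume_Icc, Real.volume_Icc]
    congr 2 <;> ring
  have hQi : Integrable (Q.indicator fun _ => (1 : ℝ)) :=
    (integrable_indicator_iff hQm).2 (integrableOn_const (by rw [hQv]; finiteness))
  have hval : C * ((∫ y, D.indicator (fun y => ‖cauchyKernel y‖) y) + (2 * R) * (2 * R)) =
      ∫ y, C * (D.indicator (fun y => ‖cauchyKernel y‖) y + Q.indicator (fun _ => (1 : ℝ)) y) := by
    rw [integral_const_mul, integral_add hDi hQi, integral_indicator hQm, setIntegral_const]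
    simp [measureReal_def, hQv, hR0]
  rw [hval]
  refine norm_integral_le_of_norm_le ((hDi.add hQi).const_mul C) (ae_of_all _ fun y => ?_)
  have hshift : (fun i => x i - y.1 * (ζ i).re - y.2 * (ζ i).im) = planeMap ζ x (-y) := by
    funext i; simp only [planeMap, Prod.fst_neg, Prod.snd_neg]; ring
  have hD0 : 0 ≤ D.indicator (fun y => ‖cauchyKernel y‖) y :=
    Set.indicator_nonneg (fun _ _ => norm_nonneg _) _
  rw [hshift, div_eq_mul_inv, norm_mul]
  by_cases hyQ : y ∈ Q
  · refine mul_le_mul (hC _) ?_ (norm_nonneg _) hC0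
    rw [Set.indicator_of_mem hyQ]
    change ‖cauchyKernel y‖ ≤ _
    by_cases hyD : y ∈ D
    · rw [Set.indicator_of_mem hyD]; linarith
    · rw [Set.indicator_of_notMem hyD, zero_add, cauchyKernel_norm]
      refine inv_le_one_of_one_le₀ (Real.one_le_sqrt.2 ?_)
      simpa [hD] using hyD
  · rw [planeMap_eq_zero h hR x (-y), norm_zero, zero_mul]
    · exact mul_nonneg hC0 (add_nonneg hD0 (Set.indicator_nonneg (fun _ _ => zero_le_one) _))
    · rintro ⟨⟨h1, h2⟩, h3, h4⟩
      simp only [Prod.fst_neg, Prod.snd_neg] at h1 h2 h3 h4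
      exact hyQ ⟨⟨by linarith, by linarith⟩, ⟨by linarith, by linarith⟩⟩

/-! ### The transport equation -/

/-- `ζ·∇` is the derivative along `Re ζ` plus `i` times the derivative along `Im ζ`. -/
lemma sum_mul_pd {n : ℕ} (ζ : Fin n → ℂ) (F : (Fin n → ℝ) → ℂ) (x : Fin n → ℝ) :
    ∑ i, ζ i * pd F i x = fderiv ℝ F x (fun i => (ζ i).re) +
      Complex.I * fderiv ℝ F x (fun i => (ζ i).im) := by
  have key : ∀ w : Fin n → ℝ, fderiv ℝ F x w = ∑ i, (w i : ℂ) * pd F i x := by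
    intro w
    conv_lhs => rw [pi_eq_sum_univ' w]
    rw [map_sum]
    refine Finset.sum_congr rfl fun i _ => ?_
    rw [map_smul, Complex.real_smul, pd]
  rw [key, key, Finset.mul_sum, ← Finset.sum_add_distrib]
  refine Finset.sum_congr rfl fun i _ => ?_
  conv_lhs => rw [← Complex.re_add_im (ζ i)]
  ring

lemma planeMap_hasFDerivAt {n : ℕ} (ζ : Fin n → ℂ) (x : Fin n → ℝ) (t : ℝ × ℝ) :
    ∃ L : ℝ × ℝ →L[ℝ] (Fin n → ℝ), HasFDerivAt (planeMap ζ x) L t ∧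
      L (1, 0) = (fun i => (ζ i).re) ∧ L (0, 1) = (fun i => (ζ i).im) := by
  refine ⟨ContinuousLinearMap.pi fun i =>
    ((ζ i).re • ContinuousLinearMap.fst ℝ ℝ ℝ + (ζ i).im • ContinuousLinearMap.snd ℝ ℝ ℝ),
    ?_, ?_, ?_⟩
  · refine hasFDerivAt_pi.2 fun i => ?_
    exact (((hasFDerivAt_fst.mul_const _).const_add (x i)).add (hasFDerivAt_snd.mul_const _))
  · funext i; simp
  · funext i; simp

/-- `N_ζ⁻¹` is a right inverse of `ζ·∇`: the derivatives of the convolution fall on the smooth factor,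
and the oddness of the kernel brings the result to the form of `cauchy_pompeiu`. -/
lemma Ninv_transport {n : ℕ} {ζ : Fin n → ℂ} (h : IsotropicPair ζ) {f : (Fin n → ℝ) → ℂ}
    (hf : ContDiff ℝ (⊤ : ℕ∞) f) (hc : HasCompactSupport f) (x : Fin n → ℝ) :
    ∑ i, ζ i * pd (Ninv ζ f) i x = f x := by
  obtain ⟨R, -, hR⟩ := exists_coord_bound ζ hc
  set g : ℝ × ℝ → ℂ := fun y => f (planeMap ζ x y) with hg
  have hg1 : ContDiff ℝ 1 g :=
    (hf.of_le (by exact_mod_cast le_top)).comp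
      ((planeMap_contDiff ζ).comp (contDiff_const.prodMk contDiff_id))
  have hgc : HasCompactSupport g :=
    HasCompactSupport.intro (isCompact_Icc.prod isCompact_Icc) (planeMap_eq_zero h hR x)
  have hconv := hgc.hasFDerivAt_convolution_right (ContinuousLinearMap.mul ℝ ℂ)
    cauchyKernel_locallyIntegrable hg1 0
  set T := (convolution cauchyKernel (fderiv ℝ g)
    ((ContinuousLinearMap.mul ℝ ℂ).precompR (ℝ × ℝ)) volume) 0 with hT
  have hTi : ConvolutionExistsAt cauchyKernel (fderiv ℝ g) 0
      ((ContinuousLinearMap.mul ℝ ℂ).precompR (ℝ × ℝ)) volume :=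
    (hgc.fderiv ℝ).convolutionExists_right _ cauchyKernel_locallyIntegrable
      (hg1.continuous_fderiv (by norm_num)) 0
  have hTv : ∀ w, T w = ∫ y, cauchyKernel y * fderiv ℝ g (-y) w := by
    intro w
    rw [hT, convolution, ContinuousLinearMap.integral_apply hTi]
    refine integral_congr_ae (ae_of_all _ fun y => ?_)
    simp [ContinuousLinearMap.precompR]
  have hTvi : ∀ w, Integrable fun y => cauchyKernel y * fderiv ℝ g (-y) w := by
    intro w
    refine (hTi.integrable.apply_continuousLinearMap w).congr (ae_of_all _ fun y => ?_)
    simp [ContinuousLinearMap.precompR]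
  have hCP : T (1, 0) + Complex.I * T (0, 1) = 2 * Real.pi * f x := by
    rw [hTv, hTv, ← integral_const_mul, ← integral_add (hTvi _) ((hTvi _).const_mul _),
      ← integral_neg_eq_self]
    have := cauchy_pompeiu g hg1 hgc
    rw [show g 0 = f x by rw [hg]; simp only [planeMap_zero]] at this
    rw [show (2 * Real.pi * f x : ℂ) = -(-(2 * Real.pi) * f x) by ring, ← this, ← integral_neg]
    refine integral_congr_ae (ae_of_all _ fun y => ?_)
    have hodd : cauchyKernel (-y) = -cauchyKernel y := by
      simp only [cauchyKernel, Prod.fst_neg, Prod.snd_neg, Complex.ofReal_neg]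
      rw [← inv_neg]; congr 1; ring
    simp only [hodd, neg_neg]
    ring
  obtain ⟨L, hL, hL1, hL2⟩ := planeMap_hasFDerivAt ζ x 0
  have hN : HasFDerivAt (Ninv ζ f) (fderiv ℝ (Ninv ζ f) x) (planeMap ζ x 0) := by
    rw [planeMap_zero]
    exact ((Ninv_contDiff h hf hc).differentiable (by simp) x).hasFDerivAt
  have h1 := hN.comp 0 hL
  have h2 : HasFDerivAt (Ninv ζ f ∘ planeMap ζ x) ((1 / (2 * Real.pi) : ℂ) • T) 0 := by
    refine (hconv.const_mul (1 / (2 * Real.pi) : ℂ)).congr_of_eventuallyEq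
      (Eventually.of_forall fun t => Ninv_eq_convolution ζ f x t)
  -- two expressions for the derivative at `0` of `N_ζ⁻¹ f` along the plane through `x`
  have h3 := h1.unique h2
  have e1 : fderiv ℝ (Ninv ζ f) x (fun i => (ζ i).re) = (1 / (2 * Real.pi) : ℂ) * T (1, 0) := by
    rw [← hL1]; exact congrArg (fun S => S (1, 0)) h3
  have e2 : fderiv ℝ (Ninv ζ f) x (fun i => (ζ i).im) = (1 / (2 * Real.pi) : ℂ) * T (0, 1) := by
    rw [← hL2]; exact congrArg (fun S => S (0, 1)) h3
  have hpi : (Real.pi : ℂ) ≠ 0 := by exact_mod_cast Real.pi_ne_zero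
  rw [sum_mul_pd, e1, e2, mul_left_comm, ← mul_add, hCP]
  field_simp

lemma isotropicPair_of {n : ℕ} {ζ : Fin n → ℂ} (hζ : (∑ i, ζ i * ζ i) = 0)
    (hre : (∑ i, (ζ i).re ^ 2) = 1) (him : (∑ i, (ζ i).im ^ 2) = 1) : IsotropicPair ζ := by
  refine ⟨hre, him, ?_⟩
  have h1 := congrArg Complex.im hζ
  simp only [Complex.im_sum, Complex.mul_im, Complex.zero_im] at h1
  have h2 : ∀ i, (ζ i).re * (ζ i).im + (ζ i).im * (ζ i).re = 2 * ((ζ i).re * (ζ i).im) :=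
    fun i => by ring
  simp only [h2, ← Finset.mul_sum] at h1
  linarith

theorem stmt_6 (n : ℕ) (hn : 2 ≤ n) (ζ : Fin n → ℂ)
    (hζ : (∑ i, ζ i * ζ i) = 0)
    (hre : (∑ i, (ζ i).re ^ 2) = 1) (him : (∑ i, (ζ i).im ^ 2) = 1)
    (V : (Fin n → ℝ) → Fin n → ℂ)
    (hVsm : ContDiff ℝ (⊤ : ℕ∞) V) (hVsupp : HasCompactSupport V)
    -- Φ := (1/2) N_{ζ₀}⁻¹ (ζ₀·V)
    (Φ : (Fin n → ℝ) → ℂ)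
    (hΦ : Φ = fun x => (1/2 : ℂ) * Ninv ζ (fun y => ∑ i, ζ i * V y i) x)
    -- a := e^Φ
    (a : (Fin n → ℝ) → ℂ) (ha : a = fun x => Complex.exp (Φ x)) :
    -- Φ is smooth and bounded
    ContDiff ℝ (⊤ : ℕ∞) Φ ∧ (∃ M : ℝ, ∀ x, ‖Φ x‖ ≤ M) ∧
    -- Φ solves the transport equation −2ζ₀·∇Φ + ζ₀·V = 0 everywhere
    (∀ x, -2 * (∑ i, ζ i * pd Φ i x) + (∑ i, ζ i * V x i) = 0) ∧
    -- a is smooth, a and 1/a are bounded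
    ContDiff ℝ (⊤ : ℕ∞) a ∧ (∃ M : ℝ, ∀ x, ‖a x‖ ≤ M ∧ ‖(a x)⁻¹‖ ≤ M) ∧
    -- a solves −2ζ₀·∇a + (ζ₀·V) a = 0 everywhere
    (∀ x, -2 * (∑ i, ζ i * pd a i x) + (∑ i, ζ i * V x i) * a x = 0) := by
  have hiso := isotropicPair_of hζ hre him
  set f : (Fin n → ℝ) → ℂ := fun y => ∑ i, ζ i * V y i with hf
  have hfs : ContDiff ℝ (⊤ : ℕ∞) f :=
    ContDiff.sum fun i _ => contDiff_const.mul (contDiff_pi.1 hVsm i)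
  have hfc : HasCompactSupport f :=
    hVsupp.comp_left (g := fun v : Fin n → ℂ => ∑ i, ζ i * v i) (by simp)
  have hNs := Ninv_contDiff hiso hfs hfc
  have hΦs : ContDiff ℝ (⊤ : ℕ∞) Φ := by
    rw [hΦ]; exact contDiff_const.mul hNs
  obtain ⟨M, hM⟩ := Ninv_bounded hiso hfs.continuous hfc
  have hΦb : ∀ x, ‖Φ x‖ ≤ M / 2 := by
    intro x
    rw [hΦ]
    simp only [norm_mul]
    have := hM x
    norm_num
    linarith
  have hpdΦ : ∀ i x, pd Φ i x = 1 / 2 * pd (Ninv ζ f) i x := by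
    intro i x
    rw [hΦ]
    unfold pd
    rw [fderiv_const_mul (hNs.differentiable (by simp) x)]
    simp
  have hpda : ∀ i x, pd a i x = a x * pd Φ i x := by
    intro i x
    have := ((hΦs.differentiable (by simp) x).hasFDerivAt).cexp
    rw [ha]
    unfold pd
    rw [this.fderiv]
    simp
  have htr : ∀ x, -2 * (∑ i, ζ i * pd Φ i x) + f x = 0 := by
    intro x
    have h1 : ∑ i, ζ i * pd Φ i x = 1 / 2 * ∑ i, ζ i * pd (Ninv ζ f) i x := by
      rw [Finset.mul_sum]
      refine Finset.sum_congr rfl fun i _ => ?_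
      rw [hpdΦ]; ring
    rw [h1, Ninv_transport hiso hfs hfc]
    ring
  refine ⟨hΦs, ⟨M / 2, hΦb⟩, htr, ?_, ⟨Real.exp (M / 2), fun x => ?_⟩, fun x => ?_⟩
  · rw [ha]; exact hΦs.cexp
  · have h1 := (Complex.abs_re_le_norm (Φ x)).trans (hΦb x)
    rw [abs_le] at h1
    rw [ha]
    simp only [← Complex.exp_neg, Complex.norm_exp, Real.exp_le_exp, Complex.neg_re]
    constructor <;> linarith
  · have h1 : ∑ i, ζ i * pd a i x = a x * ∑ i, ζ i * pd Φ i x := by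
      rw [Finset.mul_sum]
      refine Finset.sum_congr rfl fun i _ => ?_
      rw [hpda]; ring
    rw [h1]
    linear_combination a x * htr x
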